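/- Let A(λ) = I + B/(λ+1) + C/(λ-1) with B = [[0, -2π e^{2i(x-t)}/(1+e^{4ix})],[0, -2e^{4ix}/(1+e^{4ix})]] and C = [[2e^{4ix}/(1+e^{4ix}), 0],[-(2/π) e^{2i(x+t)}/(1+e^{4ix}), 0]]. Then the matrix function M(λ) defined as A(λ)·[[1, -((λ-1)/(λ+1))π e^{2i(x-t)}],[0,1]] for λ near -1, A(λ)·[[1,0],[((λ+1)/(π(λ-1))) e^{2i(x+t)},1]] for λ near 1, and A(λ) elsewhere, is analytic at λ = -1 and at λ = 1 (i.e., the apparent singularities cancel). -/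

import Mathlib

open Complex Matrix Filter

/-- The residue matrix `B` at `λ = -1`. -/
noncomputable def Bmat (x t : ℝ) : Matrix (Fin 2) (Fin 2) ℂ :=
  !![0, -2 * (Real.pi : ℂ) * Complex.exp (2 * I * ((x : ℂ) - t)) / (1 + Complex.exp (4 * I * x));
     0, -2 * Complex.exp (4 * I * x) / (1 + Complex.exp (4 * I * x))]

/-- The residue matrix `C` at `λ = 1`. -/
noncomputable def Cmat (x t : ℝ) : Matrix (Fin 2) (Fin 2) ℂ :=
  !![2 * Complex.exp (4 * I * x) / (1 + Complex.exp (4 * I * x)), 0;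
     -(2 / (Real.pi : ℂ)) * Complex.exp (2 * I * ((x : ℂ) + t)) / (1 + Complex.exp (4 * I * x)), 0]

/-- `A(λ) = I + B/(λ+1) + C/(λ-1)`. -/
noncomputable def Amat (x t : ℝ) (lam : ℂ) : Matrix (Fin 2) (Fin 2) ℂ :=
  1 + (lam + 1)⁻¹ • Bmat x t + (lam - 1)⁻¹ • Cmat x t

/-!
Write a jump factor as `1 + ((λ - b) / (λ - a)) N`. If `B N = 0`, then its product with
`1 + B / (λ - a) + C / (λ - b)` has residue `B + C N - (b - a) N` at the simple pole `a`, because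
`(λ - b) / (λ - a) = 1 - (b - a) / (λ - a)`. When this residue vanishes, the product is
`1 + N + C / (λ - b)`, which is regular at `a`. The pole at `-1` is the case `(a, b) = (-1, 1)`; the
pole at `1` is the case `(a, b) = (1, -1)` with `B` and `C` exchanged. Both residues vanish because
`e^{2i(x-t)} e^{2i(x+t)} = e^{4ix}`.
-/

theorem one_add_smul_add_smul_mul_one_add_smul {K R : Type*} [Field K] [Ring R] [Algebra K R]
    {a b z : K} {B C N : R} (hza : z ≠ a) (hzb : z ≠ b) (hBN : B * N = 0)
    (hres : B + C * N = (b - a) • N) :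
    (1 + (z - a)⁻¹ • B + (z - b)⁻¹ • C) * (1 + ((z - b) / (z - a)) • N) =
      1 + N + (z - b)⁻¹ • C := by
  have hza' : z - a ≠ 0 := sub_ne_zero.2 hza
  have hzb' : z - b ≠ 0 := sub_ne_zero.2 hzb
  have hB : B = (b - a) • N - C * N := eq_sub_of_add_eq hres
  have hsplit : (z - b) / (z - a) + (z - a)⁻¹ * (b - a) = 1 := by
    field_simp
    ring
  have hcancel : (z - b)⁻¹ * ((z - b) / (z - a)) = (z - a)⁻¹ := by
    field_simp
  calc
    _ = 1 + (z - a)⁻¹ • B + (z - b)⁻¹ • C + ((z - b) / (z - a)) • N +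
          ((z - b)⁻¹ * ((z - b) / (z - a))) • (C * N) := by
      simp only [add_mul, mul_add, one_mul, mul_one, smul_mul_smul_comm, hBN, smul_zero]
      abel
    _ = 1 + ((z - b) / (z - a) + (z - a)⁻¹ * (b - a)) • N + (z - b)⁻¹ • C := by
      rw [hcancel, hB]
      module
    _ = 1 + N + (z - b)⁻¹ • C := by rw [hsplit, one_smul]

theorem exists_analyticAt_eventually_eq_mul_one_add_smul {𝕜 n : Type*}
    [NontriviallyNormedField 𝕜] [Fintype n] [DecidableEq n] {a b : 𝕜} {B C N : Matrix n n 𝕜}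
    (hab : a ≠ b) (hBN : B * N = 0) (hres : B + C * N = (b - a) • N) :
    ∃ g : 𝕜 → Matrix n n 𝕜, (∀ i j, AnalyticAt 𝕜 (fun z => g z i j) a) ∧
      ∀ᶠ z in nhdsWithin a {a}ᶜ,
        g z = (1 + (z - a)⁻¹ • B + (z - b)⁻¹ • C) * (1 + ((z - b) / (z - a)) • N) := by
  refine ⟨fun z => 1 + N + (z - b)⁻¹ • C, fun i j => ?_, ?_⟩
  · have hinv : AnalyticAt 𝕜 (fun z => (z - b)⁻¹) a :=
      (analyticAt_id.sub analyticAt_const).inv (sub_ne_zero.2 hab)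
    exact analyticAt_const.add (hinv.mul analyticAt_const)
  · filter_upwards [self_mem_nhdsWithin, eventually_ne_nhdsWithin hab] with z hza hzb
    exact (one_add_smul_add_smul_mul_one_add_smul hza hzb hBN hres).symm

/-- The nilpotent part `N` of the jump factor `1 + ((λ - 1) / (λ + 1)) N` at `λ = -1`. -/
noncomputable def upperJump (x t : ℝ) : Matrix (Fin 2) (Fin 2) ℂ :=
  !![0, -(Real.pi : ℂ) * Complex.exp (2 * I * ((x : ℂ) - t)); 0, 0]

/-- The nilpotent part `N` of the jump factor `1 + ((λ + 1) / (λ - 1)) N` at `λ = 1`. -/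
noncomputable def lowerJump (x t : ℝ) : Matrix (Fin 2) (Fin 2) ℂ :=
  !![0, 0; Complex.exp (2 * I * ((x : ℂ) + t)) / (Real.pi : ℂ), 0]

theorem one_add_smul_upperJump (x t : ℝ) (c : ℂ) :
    1 + c • upperJump x t =
      !![1, -c * (Real.pi : ℂ) * Complex.exp (2 * I * ((x : ℂ) - t)); 0, 1] := by
  simp [upperJump, Matrix.one_fin_two, mul_assoc]

theorem one_add_div_smul_lowerJump (x t : ℝ) (c d : ℂ) :
    1 + (c / d) • lowerJump x t =
      !![1, 0; (c / ((Real.pi : ℂ) * d)) * Complex.exp (2 * I * ((x : ℂ) + t)), 1] := by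
  have hentry (q : ℂ) : c / d * (q / Real.pi) = c / (Real.pi * d) * q := by ring
  simp [lowerJump, Matrix.one_fin_two, hentry]

theorem Bmat_mul_upperJump (x t : ℝ) : Bmat x t * upperJump x t = 0 := by
  ext i j
  fin_cases i <;> fin_cases j <;> simp [Bmat, upperJump]

theorem Cmat_mul_lowerJump (x t : ℝ) : Cmat x t * lowerJump x t = 0 := by
  ext i j
  fin_cases i <;> fin_cases j <;> simp [Cmat, lowerJump]

theorem exp_sub_mul_exp_add (x t : ℂ) :
    Complex.exp (2 * I * (x - t)) * Complex.exp (2 * I * (x + t)) = Complex.exp (4 * I * x) := by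
  rw [← Complex.exp_add]
  ring_nf

theorem Bmat_add_Cmat_mul_upperJump {x : ℝ} (t : ℝ)
    (h : 1 + Complex.exp (4 * I * (x : ℂ)) ≠ 0) :
    Bmat x t + Cmat x t * upperJump x t = (2 : ℂ) • upperJump x t := by
  have hpi : (Real.pi : ℂ) ≠ 0 := Complex.ofReal_ne_zero.2 Real.pi_ne_zero
  have hexp := exp_sub_mul_exp_add x t
  simp only [Bmat, Cmat, upperJump]
  generalize Complex.exp (4 * I * (x : ℂ)) = E at h hexp ⊢
  generalize Complex.exp (2 * I * ((x : ℂ) - t)) = p at hexp ⊢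
  generalize Complex.exp (2 * I * ((x : ℂ) + t)) = q at hexp ⊢
  have hentry01 : -2 * Real.pi * p / (1 + E) + 2 * E / (1 + E) * (-Real.pi * p) =
      2 * (-Real.pi * p) := by
    field_simp
    ring
  have hentry11 : -2 * E / (1 + E) + -(2 / Real.pi) * q / (1 + E) * (-Real.pi * p) = 0 := by
    field_simp
    linear_combination 2 * hexp
  simp only [Matrix.mul_fin_two, Matrix.of_add_of, Matrix.add_cons, Matrix.head_cons,
    Matrix.tail_cons, Matrix.empty_add_empty, Matrix.smul_of, Matrix.smul_cons, Matrix.smul_empty,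
    smul_eq_mul, mul_zero, add_zero, hentry01, hentry11]

theorem Cmat_add_Bmat_mul_lowerJump {x : ℝ} (t : ℝ)
    (h : 1 + Complex.exp (4 * I * (x : ℂ)) ≠ 0) :
    Cmat x t + Bmat x t * lowerJump x t = (-2 : ℂ) • lowerJump x t := by
  have hpi : (Real.pi : ℂ) ≠ 0 := Complex.ofReal_ne_zero.2 Real.pi_ne_zero
  have hexp := exp_sub_mul_exp_add x t
  simp only [Bmat, Cmat, lowerJump]
  generalize Complex.exp (4 * I * (x : ℂ)) = E at h hexp ⊢
  generalize Complex.exp (2 * I * ((x : ℂ) - t)) = p at hexp ⊢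
  generalize Complex.exp (2 * I * ((x : ℂ) + t)) = q at hexp ⊢
  have hentry00 : 2 * E / (1 + E) + -2 * Real.pi * p / (1 + E) * (q / Real.pi) = 0 := by
    field_simp
    linear_combination -2 * hexp
  have hentry10 : -(2 / Real.pi) * q / (1 + E) + -2 * E / (1 + E) * (q / Real.pi) =
      -2 * (q / Real.pi) := by
    field_simp
    ring
  simp only [Matrix.mul_fin_two, Matrix.of_add_of, Matrix.add_cons, Matrix.head_cons,
    Matrix.tail_cons, Matrix.empty_add_empty, Matrix.smul_of, Matrix.smul_cons, Matrix.smul_empty,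
    smul_eq_mul, mul_zero, add_zero, zero_add, hentry00, hentry10]

/-- The apparent singularities of `M(λ)` at `λ = ∓1` cancel: near `-1` (resp. `1`),
`A(λ)` times the corresponding triangular jump factor agrees on a punctured
neighbourhood with a function analytic there. -/
theorem stmt_4 (x t : ℝ) (h : 1 + Complex.exp (4 * I * (x : ℂ)) ≠ 0) :
    (∃ g : ℂ → Matrix (Fin 2) (Fin 2) ℂ,
      (∀ i j, AnalyticAt ℂ (fun z => g z i j) (-1)) ∧
      ∀ᶠ lam in nhdsWithin (-1 : ℂ) {(-1 : ℂ)}ᶜ,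
        g lam = Amat x t lam *
          !![1, -((lam - 1) / (lam + 1)) * (Real.pi : ℂ) * Complex.exp (2 * I * ((x : ℂ) - t));
             0, 1]) ∧
    (∃ g : ℂ → Matrix (Fin 2) (Fin 2) ℂ,
      (∀ i j, AnalyticAt ℂ (fun z => g z i j) 1) ∧
      ∀ᶠ lam in nhdsWithin (1 : ℂ) {(1 : ℂ)}ᶜ,
        g lam = Amat x t lam *
          !![1, 0;
             ((lam + 1) / ((Real.pi : ℂ) * (lam - 1))) * Complex.exp (2 * I * ((x : ℂ) + t)), 1]) := by
  constructor
  · have hres : Bmat x t + Cmat x t * upperJump x t = ((1 : ℂ) - -1) • upperJump x t := by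
      rw [Bmat_add_Cmat_mul_upperJump t h]
      norm_num
    simpa only [Amat, sub_neg_eq_add, one_add_smul_upperJump] using
      exists_analyticAt_eventually_eq_mul_one_add_smul (by norm_num) (Bmat_mul_upperJump x t) hres
  · have hres : Cmat x t + Bmat x t * lowerJump x t = ((-1 : ℂ) - 1) • lowerJump x t := by
      rw [Cmat_add_Bmat_mul_lowerJump t h]
      norm_num
    simpa only [Amat, sub_neg_eq_add, one_add_div_smul_lowerJump, add_right_comm] using
      exists_analyticAt_eventually_eq_mul_one_add_smul (by norm_num) (Cmat_mul_lowerJump x t) hres
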